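/- Let r ≥ 2 and 1 ≤ n₁ ≤ n₂ ≤ ⋯ ≤ n_r be integers, and let s ≥ 1 satisfy either (s ≤ n₁ + 3 and 1 < n₁ < n₂) or (s ≤ n₂ + 2 and (n₁ = 1 or n₁ = n₂)). For each j = 1,…,r let Q₁^{(j)},…,Q_s^{(j)} be points of ℙ^{n_j}(ℂ) in linearly general position. Then there exist s distinct points A₁,…,A_s ∈ ℙ¹ and, for each j, a morphism ψ_j : ℙ¹ → ℙ^{n_j} given by a basis of the degree-n_j homogeneous binary forms (so the image of ψ_j is a rational normal curve of degree n_j), such that ψ_j(Aᵢ) = Qᵢ^{(j)} for all i = 1,…,s and j = 1,…,r. In particular, the product map ψ₁ × ⋯ × ψ_r : ℙ¹ → ℙ^{n₁} × ⋯ × ℙ^{n_r} parametrizes a rational curve on the Segre product passing through the s points Pᵢ = Qᵢ^{(1)} × ⋯ × Qᵢ^{(r)} whose projection to the j-th factor has degree n_j. -/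

import Mathlib

noncomputable section

/-- Projective space `ℙᵏ(ℂ)`, the projectivization of `ℂ^{k+1}`. -/
abbrev PP (k : ℕ) := Projectivization ℂ (Fin (k + 1) → ℂ)

/-- The vector of the monomials `s^k t^(n-k)`, used to parametrize rational normal curves. -/
def veron (n : ℕ) (v : Fin 2 → ℂ) : Fin (n + 1) → ℂ :=
  fun k => v 0 ^ (k : ℕ) * v 1 ^ (n - (k : ℕ))

/-- Points of `ℙᵏ` are in linearly general position if every subset of them of size at
most `k+1` has linearly independent representative vectors. -/
def InGenPos {k m : ℕ} (Q : Fin m → PP k) : Prop :=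
  ∀ S : Finset (Fin m), S.card ≤ k + 1 →
    LinearIndependent ℂ fun i : S => (Q i).rep

/-- general position for vectors -/
def GPv {m n : ℕ} (q : Fin m → Fin (n + 1) → ℂ) : Prop :=
  ∀ S : Finset (Fin m), S.card ≤ n + 1 → LinearIndepOn ℂ q (S : Set (Fin m))

lemma GPv.coef {m n : ℕ} {q : Fin m → Fin (n + 1) → ℂ} (h : GPv q) (g : Fin m → ℂ)
    (hg : ∑ k, g k • q k = 0) (T : Finset (Fin m)) (hT : T.card ≤ n + 1)
    (hz : ∀ k, k ∉ T → g k = 0) : ∀ k, g k = 0 := by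
  have h1 := linearIndepOn_finset_iff.1 (h T hT) g (by
    rw [← hg]
    apply Finset.sum_subset (Finset.subset_univ _)
    intro k _ hk
    rw [hz k hk, zero_smul])
  intro k
  by_cases hk : k ∈ T
  · exact h1 k hk
  · exact hz k hk

lemma GPv.li {m n k : ℕ} {q : Fin m → Fin (n + 1) → ℂ} (h : GPv q) (f : Fin k → Fin m)
    (hf : Function.Injective f) (hk : k ≤ n + 1) : LinearIndependent ℂ (fun i => q (f i)) := by
  have h1 := h (Finset.univ.map ⟨f, hf⟩) (by simpa using hk)
  exact LinearIndependent.comp h1 (fun i : Fin k => ⟨f i, by simp⟩)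
    (fun a b hab => hf (by simpa using hab))

lemma GPv.comp {m n k : ℕ} {q : Fin m → Fin (n + 1) → ℂ} (h : GPv q) (f : Fin k → Fin m)
    (hf : Function.Injective f) : GPv (fun i => q (f i)) := by
  intro S hS
  have h1 := h (S.map ⟨f, hf⟩) (by simpa using hS)
  exact LinearIndependent.comp h1 (fun i : S => ⟨f i, by simpa using ⟨i.1, i.2, rfl⟩⟩)
    (fun a b hab => Subtype.ext (hf (by simpa using hab)))

lemma exists_equiv_li {n k : ℕ} (v q : Fin k → Fin (n + 1) → ℂ) (hv : LinearIndependent ℂ v)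
    (hq : LinearIndependent ℂ q) :
    ∃ e : (Fin (n + 1) → ℂ) ≃ₗ[ℂ] (Fin (n + 1) → ℂ), ∀ i, e (v i) = q i := by
  let bv := Module.Basis.span hv
  let bq := Module.Basis.span hq
  obtain ⟨g, hg⟩ := Submodule.exists_linearEquiv_restrict_eq (bv.equiv bq (Equiv.refl _))
  refine ⟨g, fun i => ?_⟩
  have h1 := hg (bv i)
  rw [Module.Basis.equiv_apply] at h1
  have h2 : ((bv i : Submodule.span ℂ (Set.range v)) : Fin (n + 1) → ℂ) = v i :=
    congrArg Subtype.val (Module.Basis.span_apply hv i)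
  have h3 : ((bq i : Submodule.span ℂ (Set.range q)) : Fin (n + 1) → ℂ) = q i :=
    congrArg Subtype.val (Module.Basis.span_apply hq i)
  rw [h2] at h1
  rw [← h1]
  exact h3

lemma exists_coeffs {n : ℕ} (q : Fin (n + 1) → Fin (n + 1) → ℂ) (hq : LinearIndependent ℂ q)
    (y : Fin (n + 1) → ℂ) : ∃ a : Fin (n + 1) → ℂ, ∑ i, a i • q i = y := by
  have h := hq.span_eq_top_of_card_eq_finrank' (by simp)
  have : y ∈ Submodule.span ℂ (Set.range q) := by rw [h]; trivial
  exact (Submodule.mem_span_range_iff_exists_fun ℂ).1 this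

lemma coeffs_ne {n : ℕ} {q : Fin (n + 2) → Fin (n + 1) → ℂ} (hq : GPv q)
    (a : Fin (n + 1) → ℂ) (ha : ∑ i, a i • q i.castSucc = q (Fin.last _)) (i : Fin (n + 1)) :
    a i ≠ 0 := by
  intro h0
  have h := hq.coef (Fin.snoc a (-1 : ℂ) : Fin (n + 2) → ℂ)
    (by rw [Fin.sum_univ_castSucc]; simp [ha]) (Finset.univ.erase i.castSucc) (by simp)
    (by intro k hk; have : k = i.castSucc := by simpa using hk
        subst this; simpa using h0) (Fin.last _)
  simp at h

lemma equiv_n2 {n : ℕ} {q v : Fin (n + 2) → Fin (n + 1) → ℂ} (hq : GPv q) (hv : GPv v) :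
    ∃ e : (Fin (n + 1) → ℂ) ≃ₗ[ℂ] (Fin (n + 1) → ℂ), ∀ i, ∃ c : ℂ, c ≠ 0 ∧ q i = c • e (v i) := by
  have lq := hq.li Fin.castSucc (Fin.castSucc_injective _) le_rfl
  have lv := hv.li Fin.castSucc (Fin.castSucc_injective _) le_rfl
  obtain ⟨a, ha⟩ := exists_coeffs _ lq (q (Fin.last _))
  obtain ⟨b, hb⟩ := exists_coeffs _ lv (v (Fin.last _))
  have ha0 := coeffs_ne hq a ha
  have hb0 := coeffs_ne hv b hb
  obtain ⟨e, he⟩ := exists_equiv_li _ _ lv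
    (lq.units_smul (fun i => Units.mk0 (a i / b i) (div_ne_zero (ha0 i) (hb0 i))))
  have he' : ∀ i : Fin (n + 1), e (v i.castSucc) = (a i / b i) • q i.castSucc := fun i => he i
  refine ⟨e, fun i => ?_⟩
  induction i using Fin.lastCases with
  | last =>
    refine ⟨1, one_ne_zero, ?_⟩
    rw [← hb, ← ha, one_smul, map_sum]
    refine Finset.sum_congr rfl fun i _ => ?_
    rw [map_smul, he', smul_smul, mul_div_cancel₀ _ (hb0 i)]
  | cast i =>
    refine ⟨b i / a i, div_ne_zero (hb0 i) (ha0 i), ?_⟩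
    rw [he', smul_smul]
    have h1 := ha0 i
    have h2 := hb0 i
    have : b i / a i * (a i / b i) = 1 := by field_simp
    rw [this, one_smul]

lemma mk_cross {u v : Fin 2 → ℂ} (hu : u ≠ 0) (hv : v ≠ 0)
    (h : Projectivization.mk ℂ u hu = Projectivization.mk ℂ v hv) : u 0 * v 1 = u 1 * v 0 := by
  obtain ⟨a, ha⟩ := (Projectivization.mk_eq_mk_iff' ℂ u v hu hv).1 h
  subst ha
  simp; ring

lemma cross_eq {A B : PP 1} (h : A.rep 0 * B.rep 1 = A.rep 1 * B.rep 0) : A = B := by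
  by_contra hne
  have hl := (Projectivization.linearIndependent_pair_iff_ne (D := A) (D' := B)).2 hne
  rw [LinearIndependent.pair_iff] at hl
  have hB := B.rep_nonzero
  have key : ∀ k : Fin 2, B.rep k = 0 := by
    intro k
    have := (hl (B.rep k) (-A.rep k) (by
      ext l
      fin_cases k <;> fin_cases l <;> simp <;> first | (ring1; done) | linear_combination h | linear_combination -h)).1
    exact this
  exact hB (funext key)

instance : Infinite (PP 1) := by
  refine Infinite.of_injective
    (fun t : ℂ => (Projectivization.mk ℂ (![t, 1] : Fin 2 → ℂ) (by
      intro h; simpa using congrFun h 1) : PP 1)) ?_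
  intro a b h
  simpa using mk_cross _ _ h

lemma veron_li_sq (n : ℕ) (A : Fin (n + 1) → PP 1) (hA : Function.Injective A) :
    LinearIndependent ℂ (fun i => veron n (A i).rep) := by
  have hd : (Matrix.projVandermonde (fun i => (A i).rep 0) (fun i => (A i).rep 1)).det ≠ 0 := by
    rw [Matrix.det_projVandermonde]
    refine Finset.prod_ne_zero_iff.2 fun i _ => Finset.prod_ne_zero_iff.2 fun j hj h => ?_
    have : i = j := hA (cross_eq (by linear_combination -h))
    subst this
    simp at hj
  have := Matrix.linearIndependent_rows_of_det_ne_zero hd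
  have h2 : (fun i => veron n (A i).rep) = fun i =>
      Matrix.projVandermonde (fun i => (A i).rep 0) (fun i => (A i).rep 1) i := by
    ext i k
    simp [veron, Matrix.projVandermonde_apply, Fin.val_rev]
  rw [h2]
  exact this

lemma veron_gp (n : ℕ) {m : ℕ} (A : Fin m → PP 1) (hA : Function.Injective A) :
    GPv (fun i => veron n (A i).rep) := by
  classical
  intro S hS
  obtain ⟨T, hT, hTc⟩ := Infinite.exists_superset_card_eq (S.image A) (n + 1)
    (Finset.card_image_le.trans hS)
  let e := (T.equivFinOfCardEq hTc)
  have h := veron_li_sq n (fun k => (e.symm k : PP 1))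
    (fun a b hab => e.symm.injective (Subtype.ext hab))
  have h2 := h.comp (fun i : S => e ⟨A i, hT (Finset.mem_image_of_mem _ i.2)⟩)
    (fun a b hab => by
      have := e.injective hab
      exact Subtype.ext (hA (by simpa using this)))
  have h3 : LinearIndependent ℂ (fun i : S => veron n (A i).rep) := by
    convert h2 using 1
    ext i k
    simp
  exact h3

lemma veron_smul (n : ℕ) (c : ℂ) (x : Fin 2 → ℂ) : veron n (c • x) = c ^ n • veron n x := by
  ext k
  have : c ^ n = c ^ (k : ℕ) * c ^ (n - (k : ℕ)) := by
    rw [← pow_add]; congr 1; omega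
  simp only [veron, Pi.smul_apply, smul_eq_mul, this]
  ring

/-- n+3 points -/
lemma exists_curve_n3 {n : ℕ} {q : Fin (n + 3) → Fin (n + 1) → ℂ} (hq : GPv q) :
    ∃ A : Fin (n + 3) → PP 1, Function.Injective A ∧
    ∃ e : (Fin (n + 1) → ℂ) ≃ₗ[ℂ] (Fin (n + 1) → ℂ),
      ∀ i, ∃ c : ℂ, c ≠ 0 ∧ q i = c • e (veron n (A i).rep) := by
  have i1 : Function.Injective (fun i : Fin (n + 1) => i.castSucc.castSucc) :=
    (Fin.castSucc_injective _).comp (Fin.castSucc_injective _)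
  have lq := hq.li (fun i : Fin (n + 1) => i.castSucc.castSucc) i1 le_rfl
  obtain ⟨α, hα⟩ := exists_coeffs _ lq (q (Fin.last _).castSucc)
  obtain ⟨γ, hγ⟩ := exists_coeffs _ lq (q (Fin.last _))
  have key : ∀ (i j : Fin (n + 1)) (l μ : ℂ), l ≠ 0 ∨ μ ≠ 0 → l * α i = μ * γ i →
      l * α j = μ * γ j → (i ≠ j ∨ l = 0 ∨ μ = 0) → False := by
    intro i j l μ h0 hi hj hij
    set g : Fin (n + 3) → ℂ := Fin.snoc (Fin.snoc (fun k => l * α k - μ * γ k) (-l) : Fin (n+2) → ℂ) μ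
      with hg
    have hsum : ∑ k, g k • q k = 0 := by
      rw [Fin.sum_univ_castSucc, Fin.sum_univ_castSucc]
      simp only [hg, Fin.snoc_castSucc, Fin.snoc_last, sub_smul, Finset.sum_sub_distrib, mul_smul,
        ← Finset.smul_sum, hα, hγ]
      module
    have hgi : g i.castSucc.castSucc = 0 := by simp [hg, hi]
    have hgj : g j.castSucc.castSucc = 0 := by simp [hg, hj]
    have hl : g (Fin.last _).castSucc = -l := by simp [hg]
    have hm : g (Fin.last _) = μ := by simp [hg]
    have fin : ∀ a b : Fin (n + 3), a ≠ b → g a = 0 → g b = 0 → False := by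
      intro a b hab ha hb
      have := hq.coef g hsum ((Finset.univ.erase a).erase b) (by
        rw [Finset.card_erase_of_mem (by simp [hab.symm]), Finset.card_erase_of_mem (by simp)]
        simp) (by
        intro k hk
        by_cases h1 : k = b
        · rw [h1, hb]
        · by_cases h2 : k = a
          · rw [h2, ha]
          · simp [h1, h2] at hk)
      have e1 := this (Fin.last _).castSucc
      have e2 := this (Fin.last _)
      rw [hl] at e1
      rw [hm] at e2
      rcases h0 with h0 | h0
      · exact h0 (by simpa using e1)
      · exact h0 e2
    rcases hij with hij | hij | hij
    · exact fin _ _ (fun h => hij (i1 h)) hgi hgj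
    · exact fin _ _ (by simp [Fin.ext_iff]; omega) hgi (hl.trans (by rw [hij, neg_zero]))
    · exact fin _ _ (by simp [Fin.ext_iff]; omega) hgi (hm.trans hij)
  have hα0 : ∀ i, α i ≠ 0 := fun i h =>
    key i i 1 0 (by simp) (by simp [h]) (by simp [h]) (by simp)
  have hγ0 : ∀ i, γ i ≠ 0 := fun i h =>
    key i i 0 1 (by simp) (by simp [h]) (by simp [h]) (by simp)
  set a : Fin (n + 1) → ℂ := fun i => α i / γ i with ha
  have ha0 : ∀ i, a i ≠ 0 := fun i => div_ne_zero (hα0 i) (hγ0 i)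
  have hainj : Function.Injective a := by
    intro i j hij
    by_contra hne
    have h1 := hγ0 i
    have h2 := hγ0 j
    have h3 : α i = a i * γ i := by simp [ha, h1]
    have h4 : α j = a i * γ j := by rw [hij]; simp [ha, h2]
    exact key i j 1 (a i) (by simp) (by rw [one_mul]; exact h3) (by rw [one_mul]; exact h4)
      (Or.inl hne)
  set x : Fin (n + 3) → Fin 2 → ℂ :=
    Fin.snoc (Fin.snoc (fun k => ![a k, 1]) ![1, 0] : Fin (n + 2) → Fin 2 → ℂ) ![0, 1] with hx
  have x1 : ∀ i : Fin (n + 1), x i.castSucc.castSucc = ![a i, 1] := fun i => by simp [hx]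
  have x2 : x (Fin.last _).castSucc = ![1, 0] := by simp [hx]
  have x3 : x (Fin.last _) = ![0, 1] := by simp [hx]
  have hx0 : ∀ i, x i ≠ 0 := by
    intro i
    induction i using Fin.lastCases with
    | last => rw [x3]; simp
    | cast i =>
      induction i using Fin.lastCases with
      | last => rw [x2]; simp
      | cast i => rw [x1]; simp
  let A : Fin (n + 3) → PP 1 := fun i => Projectivization.mk ℂ (x i) (hx0 i)
  have hA : Function.Injective A := by
    intro i j hij
    have hc := mk_cross _ _ hij
    induction i using Fin.lastCases with
    | last =>
      induction j using Fin.lastCases with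
      | last => rfl
      | cast j =>
        induction j using Fin.lastCases with
        | last => rw [x2, x3] at hc; simp at hc
        | cast j => rw [x1, x3] at hc; simp at hc; exact absurd hc.symm (ha0 j)
    | cast i =>
      induction i using Fin.lastCases with
      | last =>
        induction j using Fin.lastCases with
        | last => rw [x2, x3] at hc; simp at hc
        | cast j =>
          induction j using Fin.lastCases with
          | last => rfl
          | cast j => rw [x1, x2] at hc; simp at hc
      | cast i =>
        induction j using Fin.lastCases with
        | last => rw [x1, x3] at hc; simp at hc; exact absurd hc (ha0 i)
        | cast j =>
          induction j using Fin.lastCases with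
          | last => rw [x1, x2] at hc; simp at hc
          | cast j =>
            rw [x1, x1] at hc; simp at hc; rw [hainj hc]
  have hrep : ∀ i, ∃ d : ℂ, d ≠ 0 ∧ veron n (A i).rep = d • veron n (x i) := by
    intro i
    obtain ⟨u, hu⟩ := Projectivization.exists_smul_eq_mk_rep ℂ (x i) (hx0 i)
    refine ⟨(u : ℂ) ^ n, pow_ne_zero _ u.ne_zero, ?_⟩
    rw [← veron_smul]
    exact congrArg _ hu.symm
  have hgv := veron_gp n A hA
  obtain ⟨e, he⟩ := equiv_n2 (hq.comp Fin.castSucc (Fin.castSucc_injective _))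
    (hgv.comp Fin.castSucc (Fin.castSucc_injective _))
  refine ⟨A, hA, e, fun i => ?_⟩
  induction i using Fin.lastCases with
  | cast i => exact he i
  | last =>
    have he' : ∀ i : Fin (n + 2), ∃ c : ℂ, c ≠ 0 ∧
        q i.castSucc = c • e (veron n (x i.castSucc)) := by
      intro i
      obtain ⟨c, hc, h⟩ := he i
      obtain ⟨d, hd, h'⟩ := hrep i.castSucc
      refine ⟨c * d, mul_ne_zero hc hd, ?_⟩
      rw [h, h', map_smul, smul_smul]
    choose c hc hce using he'
    set w : Fin (n + 3) → Fin (n + 1) → ℂ := fun i => veron n (x i) with hw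
    set c1 := c (Fin.last _) with hc1
    have hc10 : c1 ≠ 0 := hc _
    let β : Fin (n + 1) → ℂ := fun i => c1⁻¹ * (α i * c i.castSucc)
    have hβ : ∑ i, β i • w i.castSucc.castSucc = w (Fin.last _).castSucc := by
      apply e.injective
      rw [map_sum]
      have : ∀ i, e (β i • w i.castSucc.castSucc) = c1⁻¹ • (α i • q i.castSucc.castSucc) := by
        intro i
        rw [hce i.castSucc, map_smul, smul_smul, smul_smul]
        simp only [β, mul_assoc]
        rfl
      simp only [this]
      rw [← Finset.smul_sum, hα, hce (Fin.last _), smul_smul, ← hc1, inv_mul_cancel₀ hc10, one_smul]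
    set y : Fin (n + 1) → ℂ := ∑ i, (β i / a i) • w i.castSucc.castSucc with hy
    have hqy : q (Fin.last _) = c1 • e y := by
      rw [hy, map_sum, Finset.smul_sum, ← hγ]
      refine Finset.sum_congr rfl fun i _ => ?_
      rw [hce i.castSucc, map_smul, smul_smul, smul_smul]
      congr 1
      have h1 := hα0 i
      have h2 := hγ0 i
      simp only [β, ha]
      field_simp
    have hyw : y = y 0 • w (Fin.last _) := by
      ext k
      refine Fin.cases ?_ (fun k => ?_) k
      · simp [hw, x3, veron]
      · have h1 := congrFun hβ k.castSucc
        have h2 : y k.succ = w (Fin.last _).castSucc k.castSucc := by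
          rw [← h1, hy]
          simp only [Finset.sum_apply, Pi.smul_apply, smul_eq_mul, hw, x1, veron]
          refine Finset.sum_congr rfl fun i _ => ?_
          have := ha0 i
          simp [pow_succ]
          field_simp
        rw [h2]
        have : n - (k : ℕ) ≠ 0 := by omega
        simp [hw, x2, x3, veron, this]
    have hq0 : q (Fin.last _) ≠ 0 := by
      have := hq.li (fun _ : Fin 1 => Fin.last _) (Function.injective_of_subsingleton _) (by omega)
      exact this.ne_zero 0
    have hy0 : y 0 ≠ 0 := by
      intro h
      rw [hqy, hyw, h] at hq0
      simp at hq0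
    obtain ⟨d, hd, h'⟩ := hrep (Fin.last _)
    refine ⟨c1 * (y 0 / d), mul_ne_zero hc10 (div_ne_zero hy0 hd), ?_⟩
    rw [h', map_smul, smul_smul, mul_assoc, div_mul_cancel₀ _ hd, hqy]
    conv_lhs => rw [hyw]
    rw [map_smul, smul_smul]

lemma curve_le_n2 {n m : ℕ} (hm : m ≤ n + 2) {q : Fin m → Fin (n + 1) → ℂ} (hq : GPv q)
    (A : Fin m → PP 1) (hA : Function.Injective A) :
    ∃ e : (Fin (n + 1) → ℂ) ≃ₗ[ℂ] (Fin (n + 1) → ℂ),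
      ∀ i, ∃ c : ℂ, c ≠ 0 ∧ q i = c • e (veron n (A i).rep) := by
  have hv := veron_gp n A hA
  rcases Nat.lt_or_ge m (n + 2) with h | h
  · obtain ⟨e, he⟩ := exists_equiv_li _ _ (hv.li id Function.injective_id (by omega))
      (hq.li id Function.injective_id (by omega))
    exact ⟨e, fun i => ⟨1, one_ne_zero, by rw [one_smul]; exact (he i).symm⟩⟩
  · obtain rfl : m = n + 2 := le_antisymm hm h
    exact equiv_n2 hq hv

lemma to_matrix {n m : ℕ} {q v : Fin m → Fin (n + 1) → ℂ}
    (h : ∃ e : (Fin (n + 1) → ℂ) ≃ₗ[ℂ] (Fin (n + 1) → ℂ),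
      ∀ i, ∃ c : ℂ, c ≠ 0 ∧ q i = c • e (v i)) :
    ∃ M : Matrix (Fin (n + 1)) (Fin (n + 1)) ℂ, IsUnit M.det ∧
      ∀ i, ∃ c : ℂ, c ≠ 0 ∧ q i = c • M.mulVec (v i) := by
  obtain ⟨e, he⟩ := h
  refine ⟨LinearMap.toMatrix' (e : (Fin (n + 1) → ℂ) →ₗ[ℂ] (Fin (n + 1) → ℂ)), ?_, ?_⟩
  · rw [LinearMap.det_toMatrix']
    exact e.isUnit_det'
  · simpa [LinearMap.toMatrix'_mulVec] using he

lemma curve_line {n m : ℕ} (hn : n = 1) (Q : Fin m → PP n) (hQ : InGenPos Q) :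
    ∃ A : Fin m → PP 1, Function.Injective A ∧
    ∃ M : Matrix (Fin (n + 1)) (Fin (n + 1)) ℂ, IsUnit M.det ∧
      ∀ i, ∃ c : ℂ, c ≠ 0 ∧ (Q i).rep = c • M.mulVec (veron n (A i).rep) := by
  subst hn
  refine ⟨Q, ?_, !![0, 1; 1, 0], ?_, ?_⟩
  · intro i j hij
    have := hQ {i, j} Finset.card_le_two
    have h2 := @LinearIndependent.injective _ _ _ _ _ _ _ _ this ⟨i, by simp⟩ ⟨j, by simp⟩ (by simp [hij])
    simpa using h2
  · simp [Matrix.det_fin_two]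
  · intro i
    refine ⟨1, one_ne_zero, ?_⟩
    ext k
    fin_cases k <;> simp [Matrix.mulVec, dotProduct, veron]

lemma exists_curve_eq {n m : ℕ} (hm : m = n + 3) {q : Fin m → Fin (n + 1) → ℂ} (hq : GPv q) :
    ∃ A : Fin m → PP 1, Function.Injective A ∧
    ∃ e : (Fin (n + 1) → ℂ) ≃ₗ[ℂ] (Fin (n + 1) → ℂ),
      ∀ i, ∃ c : ℂ, c ≠ 0 ∧ q i = c • e (veron n (A i).rep) := by
  subst hm
  exact exists_curve_n3 hq

/-- Curves on a Segre product through generic points: given points `Qᵢ^{(j)}` of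
`ℙ^{n_j}` in linearly general position (`1 ≤ i ≤ s`, `1 ≤ j ≤ r`), under the numerical
hypotheses there are `s` distinct parameters `Aᵢ ∈ ℙ¹` and, for each `j`, a morphism
`ψⱼ : ℙ¹ → ℙ^{n_j}` given by a basis of the degree-`n_j` binary forms (encoded by an
invertible coefficient matrix `Mⱼ`, so its image is a rational normal curve of degree
`n_j`) such that `ψⱼ(Aᵢ) = Qᵢ^{(j)}` for all `i, j`.  Hence the product map
`ψ₁ × ⋯ × ψ_r` parametrizes a rational curve on `ℙ^{n₁} × ⋯ × ℙ^{n_r}` through the `s`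
points whose projection to the `j`-th factor has degree `n_j`. -/
theorem curve_on_segre_through_points
    (r : ℕ) (hr : 2 ≤ r) (nv : Fin r → ℕ) (hnv : ∀ j, 1 ≤ nv j) (hmono : Monotone nv)
    (s : ℕ) (hs : 1 ≤ s)
    (hcond :
      (s ≤ nv ⟨0, by omega⟩ + 3 ∧ 1 < nv ⟨0, by omega⟩ ∧ nv ⟨0, by omega⟩ < nv ⟨1, by omega⟩) ∨
      (s ≤ nv ⟨1, by omega⟩ + 2 ∧ (nv ⟨0, by omega⟩ = 1 ∨ nv ⟨0, by omega⟩ = nv ⟨1, by omega⟩)))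
    (Q : (j : Fin r) → Fin s → PP (nv j))
    (hQ : ∀ j, InGenPos (Q j)) :
    ∃ A : Fin s → PP 1, Function.Injective A ∧
      ∃ M : (j : Fin r) → Matrix (Fin (nv j + 1)) (Fin (nv j + 1)) ℂ,
        ∀ j, IsUnit (M j).det ∧
          ∀ i, ∃ c : ℂ, c ≠ 0 ∧ (Q j i).rep = c • (M j).mulVec (veron (nv j) (A i).rep) := by
  have hgp : ∀ j, GPv (fun i => (Q j i).rep) := fun j S hS => hQ j S hS
  have hle : ∀ j : Fin r, j ≠ ⟨0, by omega⟩ → nv ⟨1, by omega⟩ ≤ nv j := by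
    intro j hj
    apply hmono
    rw [Fin.le_def]
    have : (j : ℕ) ≠ 0 := fun h => hj (Fin.ext h)
    show 1 ≤ (j : ℕ)
    omega
  have main : (∃ A : Fin s → PP 1, Function.Injective A ∧
      ∃ M : Matrix (Fin (nv ⟨0, by omega⟩ + 1)) (Fin (nv ⟨0, by omega⟩ + 1)) ℂ, IsUnit M.det ∧
      ∀ i, ∃ c : ℂ, c ≠ 0 ∧ (Q ⟨0, by omega⟩ i).rep =
        c • M.mulVec (veron (nv ⟨0, by omega⟩) (A i).rep)) ∧ s ≤ nv ⟨1, by omega⟩ + 2 := by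
    have gen : s ≤ nv ⟨0, by omega⟩ + 2 → (∃ A : Fin s → PP 1, Function.Injective A ∧
      ∃ M : Matrix (Fin (nv ⟨0, by omega⟩ + 1)) (Fin (nv ⟨0, by omega⟩ + 1)) ℂ, IsUnit M.det ∧
      ∀ i, ∃ c : ℂ, c ≠ 0 ∧ (Q ⟨0, by omega⟩ i).rep =
        c • M.mulVec (veron (nv ⟨0, by omega⟩) (A i).rep)) := by
      intro h
      have hA : Function.Injective (fun i : Fin s => Infinite.natEmbedding (PP 1) i) :=
        fun a b hab => Fin.ext ((Infinite.natEmbedding (PP 1)).injective hab)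
      exact ⟨_, hA, to_matrix (curve_le_n2 h (hgp _) _ hA)⟩
    rcases hcond with ⟨h1, h2, h3⟩ | ⟨h1, h2 | h2⟩
    · refine ⟨?_, by omega⟩
      rcases Nat.lt_or_ge s (nv ⟨0, by omega⟩ + 3) with h | h
      · exact gen (by omega)
      · have hs3 : s = nv ⟨0, by omega⟩ + 3 := le_antisymm h1 h
        obtain ⟨A, hA, h⟩ := exists_curve_eq hs3 (hgp _)
        exact ⟨A, hA, to_matrix h⟩
    · exact ⟨curve_line h2 _ (hQ _), h1⟩
    · exact ⟨gen (by omega), h1⟩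
  obtain ⟨⟨A, hA, hM0⟩, hs2⟩ := main
  refine ⟨A, hA, ?_⟩
  have : ∀ j, ∃ M : Matrix (Fin (nv j + 1)) (Fin (nv j + 1)) ℂ, IsUnit M.det ∧
      ∀ i, ∃ c : ℂ, c ≠ 0 ∧ (Q j i).rep = c • M.mulVec (veron (nv j) (A i).rep) := by
    intro j
    by_cases hj : j = ⟨0, by omega⟩
    · subst hj; exact hM0
    · exact to_matrix (curve_le_n2 (by have := hle j hj; omega) (hgp j) A hA)
  choose M hM using this
  exact ⟨M, hM⟩

end
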